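/- Suppose q^{2m} ≠ 1 for 1 ≤ m ≤ d−1 and a(q^k s) ≠ 0 for 0 ≤ k ≤ d−1. Then det C(α,β)(s) = 0 if and only if β = q^{d−1−2k} α for some integer k with 0 ≤ k ≤ d−1. -/

import Mathlib

/-- `qa qh s = s q^{-1/2} - s⁻¹ q^{1/2}` where `qh = q^{1/2}`. -/
noncomputable def qa (qh s : ℂ) : ℂ := s * qh⁻¹ - s⁻¹ * qh

/-- `L_{0,0}(s)`: diagonal with `(k,k)`-entry `a(q^k s)`. -/
noncomputable def L00 (q qh : ℂ) (d : ℕ) (s : ℂ) : Matrix (Fin d) (Fin d) ℂ :=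
  Matrix.diagonal fun k => qa qh (q ^ (k : ℕ) * s)

/-- `L_{1,1}(s)`: diagonal with `(k,k)`-entry `a(q^{d-1-k} s)`. -/
noncomputable def L11 (q qh : ℂ) (d : ℕ) (s : ℂ) : Matrix (Fin d) (Fin d) ℂ :=
  Matrix.diagonal fun k => qa qh (q ^ (d - 1 - (k : ℕ)) * s)

/-- `L_{1,0}`: `(k+1,k)`-entry `q^{k+1} - q^{-(k+1)}` for `0 ≤ k ≤ d-2`. -/
noncomputable def L10 (q : ℂ) (d : ℕ) : Matrix (Fin d) (Fin d) ℂ :=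
  Matrix.of fun i j =>
    if (i : ℕ) = (j : ℕ) + 1 then q ^ ((j : ℕ) + 1) - (q ^ ((j : ℕ) + 1))⁻¹ else 0

/-- `L_{0,1}`: `(d-k-2, d-k-1)`-entry `q^{k+1} - q^{-(k+1)}` for `0 ≤ k ≤ d-2`,
i.e. `(i, i+1)`-entry `q^{d-1-i} - q^{-(d-1-i)}`. -/
noncomputable def L01 (q : ℂ) (d : ℕ) : Matrix (Fin d) (Fin d) ℂ :=
  Matrix.of fun i j =>
    if (j : ℕ) = (i : ℕ) + 1 then q ^ (d - 1 - (i : ℕ)) - (q ^ (d - 1 - (i : ℕ)))⁻¹ else 0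

/-- `A(β)(s) = L_{0,0}(s) + β L_{0,1}`. -/
noncomputable def Amat (q qh : ℂ) (d : ℕ) (β s : ℂ) : Matrix (Fin d) (Fin d) ℂ :=
  L00 q qh d s + β • L01 q d

/-- `D(α)(s) = -α L_{0,1} + L_{1,1}(s)`. -/
noncomputable def Dmat (q qh : ℂ) (d : ℕ) (α s : ℂ) : Matrix (Fin d) (Fin d) ℂ :=
  (-α) • L01 q d + L11 q qh d s

/-- `C(α,β)(s) = -α L_{0,0}(s) + L_{1,0} - αβ L_{0,1} + β L_{1,1}(s)`. -/
noncomputable def Cmat (q qh : ℂ) (d : ℕ) (α β s : ℂ) : Matrix (Fin d) (Fin d) ℂ :=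
  (-α) • L00 q qh d s + L10 q d + (-(α * β)) • L01 q d + β • L11 q qh d s

/-!
Put `t = s q^{-1/2}`, `u = s⁻¹ q^{1/2}`, and read a row vector of length `d` as the polynomial `p`
of degree less than `d` with these coefficients. Then `p ↦ p C(α,β)(s)` is the `q`-difference
operator
`p ↦ X⁻¹ ((1 - αtX)(1 - βuq^{1-d}X) p(qX) - (1 - αuX)(1 - βtq^{d-1}X) p(q⁻¹X))`.
Both terms show that it takes multiples of `1 - q⁻¹αuX` to multiples of `1 - αuX`; on the
cofactors it is the same operator for `C(q⁻¹α,β)(qs)` of size `d - 1`, and on the one-dimensional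
quotients it is, for suitable generators, the scalar `a(s) (β - q^{d-1} α)`. By induction
`det C(α,β)(s) = ∏_{k<d} a(q^k s) (β - q^{d-1-2k} α)`.
-/

section Determinant

variable {R : Type*} [CommRing R] {m : Type*} {n : ℕ}

theorem det_eq_mul_det_of_last_col_eq_zero (M : Matrix (Fin (n + 1)) (Fin (n + 1)) R)
    (hM : ∀ i : Fin n, M i.castSucc (Fin.last n) = 0) :
    M.det = M (Fin.last n) (Fin.last n) * (M.submatrix Fin.castSucc Fin.castSucc).det := by
  rw [Matrix.det_succ_column M (Fin.last n), Fin.sum_univ_castSucc]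
  simp [hM, ← two_mul]

/-- The unipotent upper bidiagonal matrix with all superdiagonal entries `-c`. Identifying a row
vector with the polynomial having these coefficients, it is multiplication by `1 - c X` modulo
`X ^ n`. -/
def upperBidiagonal (n : ℕ) (c : R) : Matrix (Fin n) (Fin n) R :=
  Matrix.of fun i j => if i = j then 1 else if (j : ℕ) = i + 1 then -c else 0

theorem det_upperBidiagonal (n : ℕ) (c : R) : (upperBidiagonal n c).det = 1 := by
  rw [Matrix.det_of_isUpperTriangular]
  · simp [upperBidiagonal]
  · intro i j hij
    simp only [id, Fin.lt_def] at hij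
    simp only [upperBidiagonal, Matrix.of_apply]
    split_ifs <;> grind

theorem upperBidiagonal_mul_apply_castSucc (c : R) (M : Matrix (Fin (n + 1)) m R)
    (i : Fin n) (j : m) :
    (upperBidiagonal (n + 1) c * M) i.castSucc j = M i.castSucc j - c * M i.succ j := by
  rw [Matrix.mul_apply, Fintype.sum_eq_add i.castSucc i.succ Fin.castSucc_lt_succ.ne]
  · simp [upperBidiagonal, Fin.castSucc_lt_succ.ne, sub_eq_add_neg]
  · intro k hk
    simp only [ne_eq, Fin.ext_iff, Fin.val_castSucc, Fin.val_succ] at hk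
    simp [upperBidiagonal, Fin.ext_iff, hk.2, Ne.symm hk.1]

theorem upperBidiagonal_mul_apply_last (c : R) (M : Matrix (Fin (n + 1)) m R) (j : m) :
    (upperBidiagonal (n + 1) c * M) (Fin.last n) j = M (Fin.last n) j := by
  rw [Matrix.mul_apply, Fintype.sum_eq_single (Fin.last n)]
  · simp [upperBidiagonal]
  · intro k hk
    simp [upperBidiagonal, hk.symm, k.isLt.ne]

theorem mul_upperBidiagonal_apply_zero (c : R) (M : Matrix m (Fin (n + 1)) R) (i : m) :
    (M * upperBidiagonal (n + 1) c) i 0 = M i 0 := by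
  rw [Matrix.mul_apply, Fintype.sum_eq_single 0]
  · simp [upperBidiagonal]
  · intro k hk
    simp [upperBidiagonal, hk]

theorem mul_upperBidiagonal_apply_succ (c : R) (M : Matrix m (Fin (n + 1)) R) (i : m)
    (j : Fin n) :
    (M * upperBidiagonal (n + 1) c) i j.succ = M i j.succ - c * M i j.castSucc := by
  rw [Matrix.mul_apply, Fintype.sum_eq_add j.succ j.castSucc Fin.castSucc_lt_succ.ne']
  · simp [upperBidiagonal, Fin.castSucc_lt_succ.ne, sub_eq_add_neg, mul_comm]
  · intro k hk
    simp only [ne_eq, Fin.ext_iff, Fin.val_castSucc, Fin.val_succ] at hk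
    simp [upperBidiagonal, Fin.ext_iff, hk.1, Ne.symm hk.2]

end Determinant

/-- The entries of `Cmat q qh d α β s`, as a function of arbitrary natural number indices. In the
column `j = d` just outside the matrix the entries with `i < d` are zero, because the
superdiagonal entry for `i = d - 1` is a multiple of `q ^ 0 - (q ^ 0)⁻¹`. -/
noncomputable def cmatEntry (q qh : ℂ) (d : ℕ) (α β s : ℂ) (i j : ℕ) : ℂ :=
  if i = j then -α * qa qh (q ^ i * s) + β * qa qh (q ^ (d - 1 - i) * s)
  else if i = j + 1 then q ^ i - (q ^ i)⁻¹
  else if j = i + 1 then -(α * β) * (q ^ (d - 1 - i) - (q ^ (d - 1 - i))⁻¹)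
  else 0

theorem Cmat_apply (q qh : ℂ) (d : ℕ) (α β s : ℂ) (i j : Fin d) :
    Cmat q qh d α β s i j = cmatEntry q qh d α β s i j := by
  simp only [Cmat, L00, L01, L10, L11, cmatEntry, Matrix.add_apply, Matrix.smul_apply,
    Matrix.of_apply, Matrix.diagonal_apply, Fin.ext_iff, smul_eq_mul]
  split_ifs <;> grind

theorem cmatEntry_self_right (q qh : ℂ) {d i : ℕ} (α β s : ℂ) (hi : i < d) :
    cmatEntry q qh d α β s i d = 0 := by
  unfold cmatEntry
  split_ifs with _ _ h
  · omega
  · omega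
  · simp [h]
  · rfl

theorem cmatEntry_eq_zero_of_lt (q qh : ℂ) (d : ℕ) (α β s : ℂ) {i j : ℕ} (hij : j + 1 < i) :
    cmatEntry q qh d α β s i j = 0 := by
  unfold cmatEntry
  split_ifs <;> first | omega | rfl

section Reduction

variable {q qh s : ℂ}

theorem cmatEntry_succ_zero (hq0 : q ≠ 0) (α β : ℂ) {d i : ℕ} (hi : i < d) :
    cmatEntry q qh (d + 1) α β s i 0
        - q⁻¹ * (α * (s⁻¹ * qh)) * cmatEntry q qh (d + 1) α β s (i + 1) 0 =
      cmatEntry q qh d (q⁻¹ * α) β (q * s) i 0 := by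
  rcases i with _ | _ | i
  · obtain ⟨d, rfl⟩ := Nat.exists_eq_add_of_lt hi
    simp only [cmatEntry, ↓reduceIte, qa, pow_zero, one_mul, neg_mul, zero_add,
      add_tsub_cancel_right, tsub_zero, mul_inv_rev, one_ne_zero, pow_one]
    field_simp
    ring
  · simp [cmatEntry]
  · simp [cmatEntry]

theorem cmatEntry_succ_succ (hq0 : q ≠ 0) (hqh : qh ≠ 0) (hs : s ≠ 0) (α β : ℂ) {d i : ℕ} (j : ℕ)
    (hi : i < d) :
    cmatEntry q qh (d + 1) α β s i (j + 1)
        - q⁻¹ * (α * (s⁻¹ * qh)) * cmatEntry q qh (d + 1) α β s (i + 1) (j + 1) =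
      cmatEntry q qh d (q⁻¹ * α) β (q * s) i (j + 1)
        - α * (s⁻¹ * qh) * cmatEntry q qh d (q⁻¹ * α) β (q * s) i j := by
  obtain ⟨m, rfl⟩ := Nat.exists_eq_add_of_lt hi
  have h₁ : i + m + 1 + 1 - 1 - i = m + 1 := by omega
  have h₂ : i + m + 1 + 1 - 1 - (i + 1) = m := by omega
  have h₃ : i + m + 1 - 1 - i = m := by omega
  simp only [cmatEntry, qa, h₁, h₂, h₃]
  -- Both sides vanish unless `j + 1` is one of `i - 1`, `i`, `i + 1`, `i + 2`; each of these cases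
  -- is an identity of Laurent polynomials in `q`, `q ^ i`, `q ^ m`, `s` and `qh`.
  split_ifs <;> first | omega | (subst_vars; field_simp; try ring)

theorem cmatEntry_last_last (hq0 : q ≠ 0) (α β : ℂ) (d : ℕ) :
    cmatEntry q qh (d + 2) α β s (d + 1) (d + 1) =
      qa qh s * (β - q ^ (d + 1) * α)
        - α * (s⁻¹ * qh) * cmatEntry q qh (d + 2) α β s (d + 1) d := by
  simp only [cmatEntry, ↓reduceIte, qa, mul_inv_rev, neg_mul, Nat.add_one_sub_one, tsub_self,
    pow_zero, one_mul, Nat.add_eq_left, one_ne_zero]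
  field_simp
  ring

/-- The block lower triangular matrix with diagonal blocks `C(q⁻¹α, β)(qs)` of size `d` and
`a(s) (β - q ^ d α)` of size one, to which `C(α, β)(s)` of size `d + 1` is reduced by unipotent
row and column operations. Left of the corner, its last row is that of `C(α, β)(s)`. -/
noncomputable def reducedCmat (q qh : ℂ) (d : ℕ) (α β s : ℂ) :
    Matrix (Fin (d + 1)) (Fin (d + 1)) ℂ :=
  Matrix.of fun i j =>
    if i = Fin.last d then
      if j = Fin.last d then qa qh s * (β - q ^ d * α) else Cmat q qh (d + 1) α β s i j
    else cmatEntry q qh d (q⁻¹ * α) β (q * s) i j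

theorem det_reducedCmat (q qh : ℂ) (d : ℕ) (α β s : ℂ) :
    (reducedCmat q qh d α β s).det =
      qa qh s * (β - q ^ d * α) * (Cmat q qh d (q⁻¹ * α) β (q * s)).det := by
  have hblock : (reducedCmat q qh d α β s).submatrix Fin.castSucc Fin.castSucc =
      Cmat q qh d (q⁻¹ * α) β (q * s) := by
    ext i j
    simp [reducedCmat, Cmat_apply, Fin.castSucc_ne_last]
  rw [det_eq_mul_det_of_last_col_eq_zero, hblock]
  · simp [reducedCmat]
  · intro i
    simp [reducedCmat, Fin.castSucc_ne_last, cmatEntry_self_right]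

theorem reducedCmat_mul_upperBidiagonal_apply_last (hq0 : q ≠ 0) (α β : ℂ) (d : ℕ)
    (j : Fin (d + 1)) :
    (reducedCmat q qh d α β s * upperBidiagonal (d + 1) (α * (s⁻¹ * qh))) (Fin.last d) j =
      Cmat q qh (d + 1) α β s (Fin.last d) j := by
  cases d with
  | zero =>
    rw [Fin.fin_one_eq_zero j, mul_upperBidiagonal_apply_zero]
    simp only [reducedCmat, Nat.reduceAdd, Fin.last_zero, Fin.isValue, pow_zero, one_mul,
      Cmat_apply, cmatEntry, Fin.val_eq_zero, ↓reduceIte, neg_mul, tsub_self, zero_tsub,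
      Matrix.of_apply]
    ring
  | succ d =>
    cases j using Fin.cases with
    | zero => simp [mul_upperBidiagonal_apply_zero, reducedCmat, Fin.ext_iff]
    | succ j =>
      rw [mul_upperBidiagonal_apply_succ]
      cases j using Fin.lastCases with
      | last =>
        simpa [reducedCmat, Cmat_apply, Fin.ext_iff] using (cmatEntry_last_last hq0 α β d).symm
      | cast j =>
        have hj : (j : ℕ) ≠ d + 1 := by omega
        simp [reducedCmat, Cmat_apply, Fin.ext_iff, cmatEntry_eq_zero_of_lt, hj, j.isLt.ne]

theorem upperBidiagonal_mul_Cmat (hq0 : q ≠ 0) (hqh : qh ≠ 0) (hs : s ≠ 0) (α β : ℂ) (d : ℕ) :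
    upperBidiagonal (d + 1) (q⁻¹ * (α * (s⁻¹ * qh))) * Cmat q qh (d + 1) α β s =
      reducedCmat q qh d α β s * upperBidiagonal (d + 1) (α * (s⁻¹ * qh)) := by
  ext i j
  cases i using Fin.lastCases with
  | last =>
    rw [upperBidiagonal_mul_apply_last, reducedCmat_mul_upperBidiagonal_apply_last hq0]
  | cast i =>
    rw [upperBidiagonal_mul_apply_castSucc]
    cases j using Fin.cases with
    | zero =>
      rw [mul_upperBidiagonal_apply_zero]
      simpa [reducedCmat, Cmat_apply, Fin.castSucc_ne_last] using
        cmatEntry_succ_zero hq0 α β i.isLt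
    | succ j =>
      rw [mul_upperBidiagonal_apply_succ]
      simpa [reducedCmat, Cmat_apply, Fin.castSucc_ne_last] using
        cmatEntry_succ_succ hq0 hqh hs α β j i.isLt

theorem det_Cmat_succ (hq0 : q ≠ 0) (hqh : qh ≠ 0) (hs : s ≠ 0) (α β : ℂ) (d : ℕ) :
    (Cmat q qh (d + 1) α β s).det =
      qa qh s * (β - q ^ d * α) * (Cmat q qh d (q⁻¹ * α) β (q * s)).det := by
  simpa [det_upperBidiagonal, det_reducedCmat] using
    congrArg Matrix.det (upperBidiagonal_mul_Cmat hq0 hqh hs α β d)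

theorem det_Cmat (hq0 : q ≠ 0) (hqh : qh ≠ 0) (hs : s ≠ 0) (α β : ℂ) (d : ℕ) :
    (Cmat q qh d α β s).det =
      ∏ k ∈ Finset.range d, qa qh (q ^ k * s) * (β - q ^ ((d : ℤ) - 1 - 2 * (k : ℤ)) * α) := by
  induction d generalizing α s with
  | zero => simp
  | succ d ih =>
    rw [det_Cmat_succ hq0 hqh hs, ih (mul_ne_zero hq0 hs), Finset.prod_range_succ', mul_comm]
    congr 1
    · refine Finset.prod_congr rfl fun k _ => ?_
      have hexp : q ^ ((d : ℤ) - 1 - 2 * k) * q⁻¹ =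
          q ^ (((d + 1 : ℕ) : ℤ) - 1 - 2 * ((k + 1 : ℕ) : ℤ)) := by
        rw [← zpow_sub_one₀ hq0]
        push_cast
        ring_nf
      rw [← mul_assoc, ← mul_assoc, ← pow_succ, hexp]
    · simp

end Reduction

theorem det_Cmat_eq_zero_iff_general (d : ℕ) (hd : 1 ≤ d) (q qh : ℂ) (hq : qh ^ 2 = q)
    (hq0 : q ≠ 0) (α β s : ℂ) (hs : s ≠ 0)
    (ha : ∀ k : ℕ, k ≤ d - 1 → qa qh (q ^ k * s) ≠ 0) :
    (Cmat q qh d α β s).det = 0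
      ↔ ∃ k : ℕ, k ≤ d - 1 ∧ β = q ^ ((d : ℤ) - 1 - 2 * (k : ℤ)) * α := by
  have hqh : qh ≠ 0 := by
    rintro rfl
    simp [← hq] at hq0
  rw [det_Cmat hq0 hqh hs, Finset.prod_eq_zero_iff]
  refine exists_congr fun k => ?_
  rw [Finset.mem_range, ← Nat.le_sub_one_iff_lt hd, and_congr_right_iff]
  intro hk
  rw [mul_eq_zero_iff_left (ha k hk), sub_eq_zero]

theorem det_Cmat_eq_zero_iff (d : ℕ) (hd : 2 ≤ d) (q qh : ℂ) (hq : qh ^ 2 = q) (hq0 : q ≠ 0)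
    (hq2 : ∀ m : ℕ, 1 ≤ m → m ≤ d - 1 → q ^ (2 * m) ≠ 1)
    (α β : ℂ) (hα : α ≠ 0) (hβ : β ≠ 0) (s : ℂ) (hs : s ≠ 0)
    (ha : ∀ k : ℕ, k ≤ d - 1 → qa qh (q ^ k * s) ≠ 0) :
    (Cmat q qh d α β s).det = 0
      ↔ ∃ k : ℕ, k ≤ d - 1 ∧ β = q ^ ((d : ℤ) - 1 - 2 * (k : ℤ)) * α :=
  det_Cmat_eq_zero_iff_general d (by omega) q qh hq hq0 α β s hs ha
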